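/- Let a, b ∈ ℝ, let G : ℝ² → ℂ² be G(x₁,x₂) = ( a x₁ − b x₂ + i(x₁² − x₂²) , a x₂ + b x₁ − 2i x₁ x₂ ), and let P_{π/2} = {(iu, iv) : u, v ∈ ℝ} ⊆ ℂ². Then for every x = (x₁,x₂) ∈ ℝ², with r² = x₁² + x₂²: dist(G(x), P_{π/2}) = √(a² + b²)·r, while ‖G(x)‖² = (a² + b²)r² + r⁴ ≥ r⁴; consequently dist(G(x), P_{π/2}) ≤ √(a² + b²) · ‖G(x)‖^{1/2}. In particular the image of G is asymptotic at infinity, with sublinear decay, to the Lagrangian plane P_{π/2} (which it approaches with multiplicity two). -/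

import Mathlib

/-- The point of `ℂ²` (with the Euclidean metric) with coordinates `z, w`. -/
noncomputable def e2 (z w : ℂ) : EuclideanSpace ℂ (Fin 2) :=
  (WithLp.equiv 2 (Fin 2 → ℂ)).symm ![z, w]

/-- The parametrisation `G(x₁,x₂) = (ax₁ − bx₂ + i(x₁² − x₂²), ax₂ + bx₁ − 2ix₁x₂)`, valued in
Euclidean `ℂ²`. -/
noncomputable def GmapE (a b : ℝ) (x : ℝ × ℝ) : EuclideanSpace ℂ (Fin 2) :=
  e2 (((a * x.1 - b * x.2 : ℝ) : ℂ) + Complex.I * ((x.1 ^ 2 - x.2 ^ 2 : ℝ) : ℂ))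
     (((a * x.2 + b * x.1 : ℝ) : ℂ) - 2 * Complex.I * ((x.1 * x.2 : ℝ) : ℂ))

/-- The Lagrangian plane `P_{π/2} = iℝ² ⊆ ℂ²`. -/
def Ppi2 : Set (EuclideanSpace ℂ (Fin 2)) :=
  {p | ∃ u v : ℝ, p = e2 ((u : ℂ) * Complex.I) ((v : ℂ) * Complex.I)}

/-!
Identify `x` with `w = x₁ + ix₂` and put `c = a + ib`. Then `G(x)` is the image of the point
`(cw, w²)` of a complex curve under the `ℝ`-linear isometry
`(z, w) ↦ (Re z + i Re w, Im z - i Im w)` of `ℂ²`, which carries `{0} × ℂ` onto `P_{π/2}`. Distances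
to `{0} × ℂ` are norms of first coordinates, so `dist(G(x), P_{π/2}) = |cw|`, while
`‖G(x)‖² = |cw|² + |w²|²`; in particular `r = |w| ≤ ‖G(x)‖^{1/2}`.
-/

open Complex WithLp

theorem infDist_setOf_fst_eq {p : ENNReal} [Fact (1 ≤ p)] {E F : Type*} [SeminormedAddCommGroup E]
    [SeminormedAddCommGroup F] (z : WithLp p (E × F)) (c : E) :
    Metric.infDist z {q | q.fst = c} = dist z.fst c := by
  have hmem : toLp p (c, z.snd) ∈ {q : WithLp p (E × F) | q.fst = c} := rfl
  apply le_antisymm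
  · calc
      Metric.infDist z {q | q.fst = c} ≤ dist z (toLp p (c, z.snd)) :=
        Metric.infDist_le_dist_of_mem hmem
      _ = ‖toLp p (z.fst - c, (0 : F))‖ := by
        rw [dist_eq_norm, ← sub_self z.snd]
        rfl
      _ = dist z.fst c := by rw [norm_toLp_fst, dist_eq_norm]
  · refine (Metric.le_infDist ⟨_, hmem⟩).2 ?_
    rintro q rfl
    exact dist_fst_le z q

theorem norm_sq_e2 (z w : ℂ) : ‖e2 z w‖ ^ 2 = ‖z‖ ^ 2 + ‖w‖ ^ 2 := by
  simp [e2, EuclideanSpace.norm_sq_eq]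

/-- The hyperkähler rotation `(z, w) ↦ (Re z + i Re w, Im z - i Im w)` of Euclidean `ℂ²`, which
takes complex curves to special Lagrangians. It is only `ℝ`-linear; its source is written as the
`L²` product `ℂ × ℂ` because the two factors play different roles. -/
noncomputable def hyperkahlerRotation : WithLp 2 (ℂ × ℂ) →ₗᵢ[ℝ] EuclideanSpace ℂ (Fin 2) where
  toFun p := e2 ⟨p.fst.re, p.snd.re⟩ ⟨p.fst.im, -p.snd.im⟩
  map_add' p q := by
    ext i
    fin_cases i <;> apply Complex.ext <;> simp [e2, add_comm]
  map_smul' t p := by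
    ext i
    fin_cases i <;> apply Complex.ext <;> simp [e2]
  norm_map' p := by
    rw [← sq_eq_sq₀ (norm_nonneg _) (norm_nonneg _), prod_norm_sq_eq_of_L2]
    change ‖e2 _ _‖ ^ 2 = _
    simp only [norm_sq_e2, Complex.sq_norm, normSq_apply]
    ring

theorem hyperkahlerRotation_apply (p : WithLp 2 (ℂ × ℂ)) :
    hyperkahlerRotation p = e2 ⟨p.fst.re, p.snd.re⟩ ⟨p.fst.im, -p.snd.im⟩ :=
  rfl

theorem hyperkahlerRotation_image_fst_eq_zero :
    hyperkahlerRotation '' {p | p.fst = 0} = Ppi2 := by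
  have mk_zero_left (t : ℝ) : (⟨0, t⟩ : ℂ) = t * I := by apply Complex.ext <;> simp
  ext q
  constructor
  · rintro ⟨p, hp : p.fst = 0, rfl⟩
    refine ⟨p.snd.re, -p.snd.im, ?_⟩
    rw [hyperkahlerRotation_apply, hp, zero_re, zero_im, mk_zero_left, mk_zero_left]
  · rintro ⟨u, v, rfl⟩
    refine ⟨toLp 2 (0, ⟨u, -v⟩), rfl, ?_⟩
    simp only [hyperkahlerRotation_apply, toLp_fst, toLp_snd, zero_re, zero_im, neg_neg,
      mk_zero_left]

theorem infDist_hyperkahlerRotation_Ppi2 (p : WithLp 2 (ℂ × ℂ)) :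
    Metric.infDist (hyperkahlerRotation p) Ppi2 = ‖p.fst‖ := by
  rw [← hyperkahlerRotation_image_fst_eq_zero, Metric.infDist_image hyperkahlerRotation.isometry,
    infDist_setOf_fst_eq, dist_zero_right]

theorem GmapE_eq_hyperkahlerRotation (a b : ℝ) (x : ℝ × ℝ) :
    GmapE a b x =
      hyperkahlerRotation (toLp 2 ((⟨a, b⟩ : ℂ) * ⟨x.1, x.2⟩, (⟨x.1, x.2⟩ : ℂ) ^ 2)) := by
  rw [GmapE, hyperkahlerRotation_apply]
  congr 1 <;> apply Complex.ext <;> simp [sq]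
  all_goals ring

theorem infDist_GmapE (a b : ℝ) (x : ℝ × ℝ) :
    Metric.infDist (GmapE a b x) Ppi2 = √(a ^ 2 + b ^ 2) * √(x.1 ^ 2 + x.2 ^ 2) := by
  rw [GmapE_eq_hyperkahlerRotation, infDist_hyperkahlerRotation_Ppi2, toLp_fst, norm_mul,
    norm_eq_sqrt_sq_add_sq, norm_eq_sqrt_sq_add_sq]

theorem norm_sq_GmapE (a b : ℝ) (x : ℝ × ℝ) :
    ‖GmapE a b x‖ ^ 2 = (a ^ 2 + b ^ 2) * (x.1 ^ 2 + x.2 ^ 2) + (x.1 ^ 2 + x.2 ^ 2) ^ 2 := by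
  rw [GmapE_eq_hyperkahlerRotation, LinearIsometry.norm_map, prod_norm_sq_eq_of_L2, toLp_fst,
    toLp_snd, norm_mul, norm_pow, mul_pow]
  simp only [Complex.sq_norm, normSq_apply, ← sq]

/-- With `r² = x₁² + x₂²`, one has `dist(G(x), P_{π/2}) = √(a²+b²)·r` while
`‖G(x)‖² = (a²+b²)r² + r⁴ ≥ r⁴`; hence `dist(G(x), P_{π/2}) ≤ √(a²+b²)·‖G(x)‖^{1/2}`: the image
of `G` is asymptotic at infinity, with sublinear decay, to the plane `P_{π/2}`. -/
theorem stmt_14 (a b : ℝ) (x : ℝ × ℝ) :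
    Metric.infDist (GmapE a b x) Ppi2
        = Real.sqrt (a ^ 2 + b ^ 2) * Real.sqrt (x.1 ^ 2 + x.2 ^ 2) ∧
    ‖GmapE a b x‖ ^ 2 = (a ^ 2 + b ^ 2) * (x.1 ^ 2 + x.2 ^ 2) + (x.1 ^ 2 + x.2 ^ 2) ^ 2 ∧
    (x.1 ^ 2 + x.2 ^ 2) ^ 2 ≤ ‖GmapE a b x‖ ^ 2 ∧
    Metric.infDist (GmapE a b x) Ppi2
        ≤ Real.sqrt (a ^ 2 + b ^ 2) * ‖GmapE a b x‖ ^ ((1 : ℝ) / 2) := by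
  have sq_le_norm_sq : (x.1 ^ 2 + x.2 ^ 2) ^ 2 ≤ ‖GmapE a b x‖ ^ 2 := by
    rw [norm_sq_GmapE]
    exact le_add_of_nonneg_left (by positivity)
  have le_norm : x.1 ^ 2 + x.2 ^ 2 ≤ ‖GmapE a b x‖ :=
    (sq_le_sq₀ (by positivity) (norm_nonneg _)).1 sq_le_norm_sq
  refine ⟨infDist_GmapE a b x, norm_sq_GmapE a b x, sq_le_norm_sq, ?_⟩
  rw [infDist_GmapE, ← Real.sqrt_eq_rpow]
  gcongr
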